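/- Let p ∈ Δ*_m, q ∈ Δ*_n, let c ∈ ℝ^{m×n} with c ≥ 0 entrywise, and let (β_t)_{t≥0} be a positive annealing schedule whose difference sequence α_t = β_t − β_{t−1} is nonnegative and nonincreasing. Let (π_t) be generated by Annealed Sinkhorn. Then for every t ≥ 1 and every π ∈ Γ(*,q): α_t ⟨c, π_t⟩ + KL(π_t𝟙 | p) ≤ KL(π𝟙 | p) + ((β_t − β_0)/t) ⟨c, π⟩ + KL(π | π_0)/t. -/

import Mathlib

open Finset Filter Topology ENNReal

noncomputable section

/-- Frobenius inner product `⟨c, π⟩ = ∑_{ij} c_ij π_ij`. -/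
def frob {m n : ℕ} (c π : Matrix (Fin m) (Fin n) ℝ) : ℝ := ∑ i, ∑ j, c i j * π i j

/-- Row sums `π𝟙`. -/
def rowSum {m n : ℕ} (π : Matrix (Fin m) (Fin n) ℝ) : Fin m → ℝ := fun i => ∑ j, π i j

/-- Column sums `πᵀ𝟙`. -/
def colSum {m n : ℕ} (π : Matrix (Fin m) (Fin n) ℝ) : Fin n → ℝ := fun j => ∑ i, π i j

/-- Kullback–Leibler divergence between nonnegative vectors. -/
def KLvec {k : ℕ} (a b : Fin k → ℝ) : ℝ := ∑ i, (a i * Real.log (a i / b i) - a i + b i)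

/-- Kullback–Leibler divergence between nonnegative matrices. -/
def KLmat {m n : ℕ} (a b : Matrix (Fin m) (Fin n) ℝ) : ℝ :=
  ∑ i, ∑ j, (a i j * Real.log (a i j / b i j) - a i j + b i j)

/-- The tipless simplex `Δ*_k`: strictly positive entries summing to 1. -/
def simplexPos (k : ℕ) : Set (Fin k → ℝ) := {p | (∀ i, 0 < p i) ∧ ∑ i, p i = 1}

/-- The simplex `Δ_k`: nonnegative entries summing to 1. -/
def simplexNN (k : ℕ) : Set (Fin k → ℝ) := {p | (∀ i, 0 ≤ p i) ∧ ∑ i, p i = 1}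

/-- Transport plans `Γ(p, q)`. -/
def Gamma {m n : ℕ} (p : Fin m → ℝ) (q : Fin n → ℝ) : Set (Matrix (Fin m) (Fin n) ℝ) :=
  {π | (∀ i j, 0 ≤ π i j) ∧ rowSum π = p ∧ colSum π = q}

/-- Half-relaxed plans `Γ(*, q)`. -/
def GammaStar {m n : ℕ} (q : Fin n → ℝ) : Set (Matrix (Fin m) (Fin n) ℝ) :=
  {π | (∀ i j, 0 ≤ π i j) ∧ colSum π = q}

/-- Reference plan `π^ref = (mn)⁻¹ 𝟙𝟙ᵀ`. -/
def piRef (m n : ℕ) : Matrix (Fin m) (Fin n) ℝ := fun _ _ => 1 / (m * n)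

/-- Optimal transport value `OT(p,q)`. -/
def OTval {m n : ℕ} (c : Matrix (Fin m) (Fin n) ℝ) (p : Fin m → ℝ) (q : Fin n → ℝ) : ℝ :=
  ⨅ π : Gamma p q, frob c π.1

/-- Entropic OT objective `⟨c,π⟩ + β⁻¹ KL(π|π^ref)`. -/
def eotObj {m n : ℕ} (c : Matrix (Fin m) (Fin n) ℝ) (β : ℝ) (π : Matrix (Fin m) (Fin n) ℝ) : ℝ :=
  frob c π + β⁻¹ * KLmat π (piRef m n)

/-- Entropic OT value `EOT_β(p,q)`. -/
def eotVal {m n : ℕ} (c : Matrix (Fin m) (Fin n) ℝ) (β : ℝ) (p : Fin m → ℝ) (q : Fin n → ℝ) : ℝ :=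
  ⨅ π : Gamma p q, eotObj c β π.1

/-- Gibbs kernel `K = e^{-βc}` (entrywise). -/
def gibbs {m n : ℕ} (c : Matrix (Fin m) (Fin n) ℝ) (β : ℝ) : Matrix (Fin m) (Fin n) ℝ :=
  fun i j => Real.exp (-(β * c i j))

/-- Annealed Sinkhorn scaling vectors `(a_t, b_t)`:
`b_0 = 𝟙`, `a_{t+1} = p ⊘ (K_t b_t)`, `b_{t+1} = q ⊘ (K_{t+1}ᵀ a_{t+1})`, `K_t = e^{-β_t c}`. -/
def sinkAB {m n : ℕ} (p : Fin m → ℝ) (q : Fin n → ℝ) (c : Matrix (Fin m) (Fin n) ℝ)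
    (β : ℕ → ℝ) : ℕ → (Fin m → ℝ) × (Fin n → ℝ)
  | 0 => (fun _ => 1, fun _ => 1)
  | t + 1 =>
    let prev := sinkAB p q c β t
    let a : Fin m → ℝ := fun i => p i / ∑ j, gibbs c (β t) i j * prev.2 j
    (a, fun j => q j / ∑ i, gibbs c (β (t + 1)) i j * a i)

/-- Annealed Sinkhorn primal iterate `π_t = diag(a_t) K_t diag(b_t)`. -/
def sinkPlan {m n : ℕ} (p : Fin m → ℝ) (q : Fin n → ℝ) (c : Matrix (Fin m) (Fin n) ℝ)
    (β : ℕ → ℝ) (t : ℕ) : Matrix (Fin m) (Fin n) ℝ :=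
  fun i j => (sinkAB p q c β t).1 i * gibbs c (β t) i j * (sinkAB p q c β t).2 j

/-- `ℓ¹` norm of a vector. -/
def l1vec {k : ℕ} (a : Fin k → ℝ) : ℝ := ∑ i, |a i|

/-- Oscillation semi-norm `‖c‖_osc = max c - min c`. -/
def cOsc {m n : ℕ} (c : Matrix (Fin m) (Fin n) ℝ) : ℝ :=
  (⨆ i, ⨆ j, c i j) - ⨅ i, ⨅ j, c i j

/-- `‖log p‖_∞`. -/
def logSup {k : ℕ} (p : Fin k → ℝ) : ℝ := ⨆ i, |Real.log (p i)|

/-- The rounding ("projection") procedure of Altschuler et al. (Algorithm 3). -/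
def roundPlan {m n : ℕ} (p : Fin m → ℝ) (q : Fin n → ℝ) (π : Matrix (Fin m) (Fin n) ℝ) :
    Matrix (Fin m) (Fin n) ℝ :=
  let π' : Matrix (Fin m) (Fin n) ℝ := fun i j => min 1 (p i / rowSum π i) * π i j
  let π'' : Matrix (Fin m) (Fin n) ℝ := fun i j => π' i j * min 1 (q j / colSum π' j)
  fun i j => π'' i j +
    (p i - rowSum π'' i) * (q j - colSum π'' j) / l1vec (fun i' => p i' - rowSum π'' i')

/-- Relaxed entropic objective `F^reg(π) = ⟨c,π⟩ + α⁻¹ KL(π𝟙|p) + β⁻¹ KL(π|π^ref)`. -/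
def Freg {m n : ℕ} (c : Matrix (Fin m) (Fin n) ℝ) (p : Fin m → ℝ) (α β : ℝ)
    (π : Matrix (Fin m) (Fin n) ℝ) : ℝ :=
  frob c π + α⁻¹ * KLvec (rowSum π) p + β⁻¹ * KLmat π (piRef m n)

/-- Dual functional for the relaxed entropic problem. -/
def dualFun {m n : ℕ} (p : Fin m → ℝ) (q : Fin n → ℝ) (c : Matrix (Fin m) (Fin n) ℝ)
    (α β : ℝ) (u : Fin m → ℝ) (v : Fin n → ℝ) : ℝ :=
  α⁻¹ * (∑ i, (1 - Real.exp (-(α * u i))) * p i) + ∑ j, v j * q j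
    - β⁻¹ * (∑ i, ∑ j, Real.exp (β * (u i + v j - c i j)) * piRef m n i j) + β⁻¹

/-- Dual functional of entropic OT. -/
def eotDual {m n : ℕ} (p : Fin m → ℝ) (q : Fin n → ℝ) (c : Matrix (Fin m) (Fin n) ℝ)
    (β : ℝ) (u : Fin m → ℝ) (v : Fin n → ℝ) : ℝ :=
  ∑ i, p i * u i + ∑ j, q j * v j
    + β⁻¹ * (1 - ∑ i, ∑ j, piRef m n i j * Real.exp (β * (u i + v j - c i j)))

/-- The set `C_β` of plans of the form `diag(a) e^{-βc} diag(b)` with `a, b ≥ 0`. -/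
def scalingSet {m n : ℕ} (c : Matrix (Fin m) (Fin n) ℝ) (β : ℝ) :
    Set (Matrix (Fin m) (Fin n) ℝ) :=
  {π | ∃ a : Fin m → ℝ, ∃ b : Fin n → ℝ, (∀ i, 0 ≤ a i) ∧ (∀ j, 0 ≤ b j) ∧
    π = fun i j => a i * Real.exp (-(β * c i j)) * b j}

/-!
Annealed Sinkhorn is online mirror descent on `Γ(*, q)`: `π_{t+1}` minimizes
`α ⟨c, π⟩ + ⟨log (π_t 𝟙 / p), π 𝟙⟩ + KL(π | π_t)`, where `α = β_{t+1} - β_t` and the second term is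
`KL(π 𝟙 | p)` linearized at `π_t`. Replacing the linearization by `KL(π 𝟙 | p)` itself costs
nothing, because its error at `π_{t+1}` is `KL(π_{t+1} 𝟙 | π_t 𝟙) ≤ KL(π_{t+1} | π_t)`, by the
log-sum inequality, and its error at a competitor `π` has the favourable sign. This gives
`f_α(π_{t+1}) + KL(π | π_{t+1}) ≤ f_α(π) + KL(π | π_t)` for `f_α(π) = α ⟨c, π⟩ + KL(π 𝟙 | p)`.
With `π = π_t`, `c ≥ 0` and `α` nonincreasing, the values `f_α(π_{t+1})` decrease; with `π` fixed, the
inequality telescopes, and the last value is at most the average.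
-/

section Divergence

open scoped Matrix
open InformationTheory (klFun klFun_nonneg convexOn_klFun)

lemma mul_log_div_sub_add_eq_mul_klFun (a : ℝ) {b : ℝ} (hb : b ≠ 0) :
    a * Real.log (a / b) - a + b = b * klFun (a / b) := by
  unfold klFun
  field_simp
  ring

lemma mul_log_div_eq_add (a : ℝ) {b c : ℝ} (hb : b ≠ 0) (hc : c ≠ 0) :
    a * Real.log (a / b) = a * Real.log (a / c) + Real.log (c / b) * a := by
  rcases eq_or_ne a 0 with rfl | ha
  · simp
  · rw [Real.log_div ha hb, Real.log_div ha hc, Real.log_div hc hb]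
    ring

variable {k m n : ℕ}

lemma KLvec_eq_sum_mul_klFun (a : Fin k → ℝ) {b : Fin k → ℝ} (hb : ∀ i, b i ≠ 0) :
    KLvec a b = ∑ i, b i * klFun (a i / b i) :=
  Finset.sum_congr rfl fun i _ => mul_log_div_sub_add_eq_mul_klFun (a i) (hb i)

lemma KLvec_nonneg {a b : Fin k → ℝ} (ha : ∀ i, 0 ≤ a i) (hb : ∀ i, 0 < b i) :
    0 ≤ KLvec a b := by
  rw [KLvec_eq_sum_mul_klFun a fun i => (hb i).ne']
  exact Finset.sum_nonneg fun i _ =>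
    mul_nonneg (hb i).le (klFun_nonneg (div_nonneg (ha i) (hb i).le))

lemma KLvec_self (a : Fin k → ℝ) : KLvec a a = 0 :=
  Finset.sum_eq_zero fun i _ => by rcases eq_or_ne (a i) 0 with h | h <;> simp [h]

lemma log_sum_inequality {a b : Fin k → ℝ} (ha : ∀ i, 0 ≤ a i) (hb : ∀ i, 0 < b i) :
    (∑ i, a i) * Real.log ((∑ i, a i) / ∑ i, b i) - ∑ i, a i + ∑ i, b i ≤ KLvec a b := by
  obtain rfl | _ := eq_zero_or_neZero k
  · simp [KLvec]
  have hsum : 0 < ∑ i, b i := Finset.sum_pos (fun i _ => hb i) Finset.univ_nonempty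
  have hmean : univ.centerMass b (fun i => a i / b i) = (∑ i, a i) / ∑ i, b i := by
    simp only [Finset.centerMass, smul_eq_mul, mul_div_cancel₀ _ (hb _).ne', inv_mul_eq_div]
  have jensen := convexOn_klFun.map_centerMass_le (t := univ) (fun i _ => (hb i).le) hsum
    fun i _ => div_nonneg (ha i) (hb i).le
  rw [hmean, Finset.centerMass, smul_eq_mul, inv_mul_eq_div, le_div_iff₀' hsum] at jensen
  rwa [mul_log_div_sub_add_eq_mul_klFun _ hsum.ne',
    KLvec_eq_sum_mul_klFun a fun i => (hb i).ne']

lemma KLvec_three_point (a : Fin k → ℝ) {b c : Fin k → ℝ} (hb : ∀ i, b i ≠ 0)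
    (hc : ∀ i, c i ≠ 0) :
    KLvec a b = KLvec a c + KLvec c b + (fun i => Real.log (c i / b i)) ⬝ᵥ (a - c) := by
  simp only [KLvec, dotProduct, Pi.sub_apply, ← Finset.sum_add_distrib]
  refine Finset.sum_congr rfl fun i _ => ?_
  rw [mul_log_div_eq_add (a i) (hb i) (hc i)]
  ring

lemma KLmat_eq_sum_KLvec (a b : Matrix (Fin m) (Fin n) ℝ) :
    KLmat a b = ∑ i, KLvec (a i) (b i) := rfl

lemma KLmat_nonneg {a b : Matrix (Fin m) (Fin n) ℝ} (ha : ∀ i j, 0 ≤ a i j)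
    (hb : ∀ i j, 0 < b i j) : 0 ≤ KLmat a b :=
  Finset.sum_nonneg fun i _ => KLvec_nonneg (ha i) (hb i)

lemma KLmat_self (a : Matrix (Fin m) (Fin n) ℝ) : KLmat a a = 0 :=
  Finset.sum_eq_zero fun i _ => KLvec_self (a i)

lemma KLmat_three_point (a : Matrix (Fin m) (Fin n) ℝ) {b c : Matrix (Fin m) (Fin n) ℝ}
    (hb : ∀ i j, b i j ≠ 0) (hc : ∀ i j, c i j ≠ 0) :
    KLmat a b = KLmat a c + KLmat c b + frob (fun i j => Real.log (c i j / b i j)) (a - c) := by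
  simp only [KLmat_eq_sum_KLvec, fun i => KLvec_three_point (a i) (hb i) (hc i),
    Finset.sum_add_distrib]
  rfl

lemma KLvec_rowSum_le_KLmat {a b : Matrix (Fin m) (Fin n) ℝ} (ha : ∀ i j, 0 ≤ a i j)
    (hb : ∀ i j, 0 < b i j) : KLvec (rowSum a) (rowSum b) ≤ KLmat a b :=
  Finset.sum_le_sum fun i _ => log_sum_inequality (ha i) (hb i)

end Divergence

section MirrorStep

open scoped Matrix

variable {m n : ℕ}

lemma rowSum_sub (a b : Matrix (Fin m) (Fin n) ℝ) : rowSum (a - b) = rowSum a - rowSum b :=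
  funext fun _ => Finset.sum_sub_distrib _ _

lemma colSum_sub (a b : Matrix (Fin m) (Fin n) ℝ) : colSum (a - b) = colSum a - colSum b :=
  funext fun _ => Finset.sum_sub_distrib _ _

lemma rowSum_pos [NeZero n] {a : Matrix (Fin m) (Fin n) ℝ} (ha : ∀ i j, 0 < a i j) (i : Fin m) :
    0 < rowSum a i :=
  Finset.sum_pos (fun j _ => ha i j) Finset.univ_nonempty

lemma frob_sub (c a b : Matrix (Fin m) (Fin n) ℝ) : frob c (a - b) = frob c a - frob c b := by
  simp only [frob, Matrix.sub_apply, mul_sub, Finset.sum_sub_distrib]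

lemma frob_nonneg {c a : Matrix (Fin m) (Fin n) ℝ} (hc : ∀ i j, 0 ≤ c i j)
    (ha : ∀ i j, 0 ≤ a i j) : 0 ≤ frob c a :=
  Finset.sum_nonneg fun i _ => Finset.sum_nonneg fun j _ => mul_nonneg (hc i j) (ha i j)

lemma frob_potential_sub_cost (u : Fin m → ℝ) (v : Fin n → ℝ) (α : ℝ)
    (c a : Matrix (Fin m) (Fin n) ℝ) :
    frob (fun i j => v j - u i - α * c i j) a =
      v ⬝ᵥ colSum a - u ⬝ᵥ rowSum a - α * frob c a := by
  have hcol : v ⬝ᵥ colSum a = ∑ i, ∑ j, v j * a i j := by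
    simp only [dotProduct, colSum, Finset.mul_sum]
    exact Finset.sum_comm
  have hrow : u ⬝ᵥ rowSum a = ∑ i, ∑ j, u i * a i j := by
    simp only [dotProduct, rowSum, Finset.mul_sum]
  simp only [hcol, hrow, frob, Finset.mul_sum, sub_mul, Finset.sum_sub_distrib, mul_assoc]

/-- The objective `f_α(π) = α ⟨c, π⟩ + KL(π𝟙 | p)` on which one step of Annealed Sinkhorn, with
increment `α` of the inverse temperature, is a mirror descent step. -/
def stepObj (c : Matrix (Fin m) (Fin n) ℝ) (p : Fin m → ℝ) (α : ℝ)
    (π : Matrix (Fin m) (Fin n) ℝ) : ℝ :=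
  α * frob c π + KLvec (rowSum π) p

lemma stepObj_mono_left {c : Matrix (Fin m) (Fin n) ℝ} (hc : ∀ i j, 0 ≤ c i j) (p : Fin m → ℝ)
    {π : Matrix (Fin m) (Fin n) ℝ} (hπ : ∀ i j, 0 ≤ π i j) :
    Monotone fun α => stepObj c p α π :=
  fun _ _ hα => add_le_add_left (mul_le_mul_of_nonneg_right hα (frob_nonneg hc hπ)) _

-- `hstep` is the stationarity condition of the mirror step from `P` to `Q`, with `v` the multiplier
-- of the column constraint.
lemma stepObj_add_KLmat_le_of_mirror_step [NeZero n] {p : Fin m → ℝ} (hp : ∀ i, 0 < p i)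
    {c P Q π : Matrix (Fin m) (Fin n) ℝ} {α : ℝ} {v : Fin n → ℝ}
    (hP : ∀ i j, 0 < P i j) (hQ : ∀ i j, 0 < Q i j) (hπ : ∀ i j, 0 ≤ π i j)
    (hcol : colSum π = colSum Q)
    (hstep : ∀ i j, Real.log (Q i j / P i j) =
      v j - Real.log (rowSum P i / p i) - α * c i j) :
    stepObj c p α Q + KLmat π Q ≤ stepObj c p α π + KLmat π P := by
  let u : Fin m → ℝ := fun i => Real.log (rowSum P i / p i)
  have hlin : frob (fun i j => Real.log (Q i j / P i j)) (π - Q) =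
      -(u ⬝ᵥ (rowSum π - rowSum Q)) - α * (frob c π - frob c Q) := by
    simp only [hstep]
    rw [frob_potential_sub_cost u, colSum_sub, hcol, sub_self, dotProduct_zero, zero_sub,
      rowSum_sub, frob_sub]
  have hplan := KLmat_three_point π (fun i j => (hP i j).ne') (fun i j => (hQ i j).ne')
  have hrow (a : Fin m → ℝ) : KLvec a p =
      KLvec a (rowSum P) + KLvec (rowSum P) p + u ⬝ᵥ (a - rowSum P) :=
    KLvec_three_point a (fun i => (hp i).ne') fun i => (rowSum_pos hP i).ne'
  have hconvex : 0 ≤ KLvec (rowSum π) (rowSum P) :=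
    KLvec_nonneg (fun i => Finset.sum_nonneg fun j _ => hπ i j) (rowSum_pos hP)
  have hsmooth := KLvec_rowSum_le_KLmat (fun i j => (hQ i j).le) hP
  rw [hlin] at hplan
  simp only [stepObj, hrow (rowSum π), hrow (rowSum Q), dotProduct_sub] at hplan ⊢
  linarith

end MirrorStep

section Averaging

lemma mul_le_sum_add_of_antitone_of_add_le {F G D : ℕ → ℝ} (hF : Antitone F)
    (hstep : ∀ s, F s + D (s + 1) ≤ G s + D s) (t : ℕ) (hD : 0 ≤ D (t + 1)) :
    (t + 1 : ℕ) * F t ≤ ∑ s ∈ range (t + 1), G s + D 0 := by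
  calc (t + 1 : ℕ) * F t
      ≤ ∑ s ∈ range (t + 1), F s := by
        simpa using Finset.card_nsmul_le_sum (range (t + 1)) F (F t)
          fun s hs => hF (Nat.lt_succ_iff.mp (Finset.mem_range.mp hs))
    _ ≤ ∑ s ∈ range (t + 1), (G s + (D s - D (s + 1))) :=
        Finset.sum_le_sum fun s _ => by linarith [hstep s]
    _ = ∑ s ∈ range (t + 1), G s + (D 0 - D (t + 1)) := by
        rw [Finset.sum_add_distrib, Finset.sum_range_sub']
    _ ≤ ∑ s ∈ range (t + 1), G s + D 0 := by linarith

end Averaging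

section Sinkhorn

variable {m n : ℕ} {p : Fin m → ℝ} {q : Fin n → ℝ} (c : Matrix (Fin m) (Fin n) ℝ) (β : ℕ → ℝ)

lemma gibbs_pos (b : ℝ) (i : Fin m) (j : Fin n) : 0 < gibbs c b i j :=
  Real.exp_pos _

lemma rowSum_sinkPlan_div (t : ℕ) (i : Fin m) :
    rowSum (sinkPlan p q c β t) i / p i =
      (sinkAB p q c β t).1 i / (sinkAB p q c β (t + 1)).1 i := by
  have ha : (sinkAB p q c β (t + 1)).1 i =
      p i / ∑ j, gibbs c (β t) i j * (sinkAB p q c β t).2 j := rfl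
  simp only [rowSum, sinkPlan, mul_assoc]
  rw [← Finset.mul_sum, ha, div_div_eq_mul_div]

variable [NeZero m] [NeZero n]

lemma sinkAB_pos (hp : ∀ i, 0 < p i) (hq : ∀ j, 0 < q j) (t : ℕ) :
    (∀ i, 0 < (sinkAB p q c β t).1 i) ∧ ∀ j, 0 < (sinkAB p q c β t).2 j := by
  induction t with
  | zero => exact ⟨fun _ => one_pos, fun _ => one_pos⟩
  | succ t ih =>
    have ha (i : Fin m) : 0 < (sinkAB p q c β (t + 1)).1 i :=
      div_pos (hp i) <| Finset.sum_pos (fun j _ => mul_pos (gibbs_pos c _ i j) (ih.2 j))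
        Finset.univ_nonempty
    exact ⟨ha, fun j => div_pos (hq j) <|
      Finset.sum_pos (fun i _ => mul_pos (gibbs_pos c _ i j) (ha i)) Finset.univ_nonempty⟩

lemma sinkPlan_pos (hp : ∀ i, 0 < p i) (hq : ∀ j, 0 < q j) (t : ℕ) (i : Fin m) (j : Fin n) :
    0 < sinkPlan p q c β t i j :=
  have hab := sinkAB_pos c β hp hq t
  mul_pos (mul_pos (hab.1 i) (gibbs_pos c _ i j)) (hab.2 j)

lemma log_sinkPlan (hp : ∀ i, 0 < p i) (hq : ∀ j, 0 < q j) (t : ℕ) (i : Fin m) (j : Fin n) :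
    Real.log (sinkPlan p q c β t i j) =
      Real.log ((sinkAB p q c β t).1 i) - β t * c i j + Real.log ((sinkAB p q c β t).2 j) := by
  have ha := ((sinkAB_pos c β hp hq t).1 i).ne'
  have hK := (gibbs_pos c (β t) i j).ne'
  rw [sinkPlan, Real.log_mul (mul_ne_zero ha hK) ((sinkAB_pos c β hp hq t).2 j).ne',
    Real.log_mul ha hK, gibbs, Real.log_exp, sub_eq_add_neg]

lemma colSum_sinkPlan_succ (hp : ∀ i, 0 < p i) (hq : ∀ j, 0 < q j) (t : ℕ) :
    colSum (sinkPlan p q c β (t + 1)) = q := by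
  funext j
  have hb : (sinkAB p q c β (t + 1)).2 j =
      q j / ∑ i, (sinkAB p q c β (t + 1)).1 i * gibbs c (β (t + 1)) i j := by
    simp only [mul_comm ((sinkAB p q c β (t + 1)).1 _)]
    rfl
  have hKa : 0 < ∑ i, (sinkAB p q c β (t + 1)).1 i * gibbs c (β (t + 1)) i j :=
    Finset.sum_pos (fun i _ => mul_pos ((sinkAB_pos c β hp hq (t + 1)).1 i) (gibbs_pos c _ i j))
      Finset.univ_nonempty
  simp only [colSum, sinkPlan]
  rw [← Finset.sum_mul, hb, mul_div_cancel₀ _ hKa.ne']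

lemma sinkPlan_succ_mem_GammaStar (hp : ∀ i, 0 < p i) (hq : ∀ j, 0 < q j) (t : ℕ) :
    sinkPlan p q c β (t + 1) ∈ GammaStar (m := m) q :=
  ⟨fun i j => (sinkPlan_pos c β hp hq (t + 1) i j).le, colSum_sinkPlan_succ c β hp hq t⟩

lemma log_sinkPlan_succ_div (hp : ∀ i, 0 < p i) (hq : ∀ j, 0 < q j) (t : ℕ) (i : Fin m)
    (j : Fin n) :
    Real.log (sinkPlan p q c β (t + 1) i j / sinkPlan p q c β t i j) =
      Real.log ((sinkAB p q c β (t + 1)).2 j / (sinkAB p q c β t).2 j)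
        - Real.log (rowSum (sinkPlan p q c β t) i / p i) - (β (t + 1) - β t) * c i j := by
  have h₀ := sinkAB_pos c β hp hq t
  have h₁ := sinkAB_pos c β hp hq (t + 1)
  rw [rowSum_sinkPlan_div c β, Real.log_div (sinkPlan_pos c β hp hq _ i j).ne'
    (sinkPlan_pos c β hp hq _ i j).ne', log_sinkPlan c β hp hq, log_sinkPlan c β hp hq,
    Real.log_div (h₁.2 j).ne' (h₀.2 j).ne', Real.log_div (h₀.1 i).ne' (h₁.1 i).ne']
  ring

lemma stepObj_sinkPlan_succ_add_KLmat_le (hp : ∀ i, 0 < p i) (hq : ∀ j, 0 < q j) (t : ℕ)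
    {π : Matrix (Fin m) (Fin n) ℝ} (hπ : π ∈ GammaStar (m := m) q) :
    stepObj c p (β (t + 1) - β t) (sinkPlan p q c β (t + 1)) + KLmat π (sinkPlan p q c β (t + 1)) ≤
      stepObj c p (β (t + 1) - β t) π + KLmat π (sinkPlan p q c β t) :=
  stepObj_add_KLmat_le_of_mirror_step hp (sinkPlan_pos c β hp hq t)
    (sinkPlan_pos c β hp hq (t + 1)) hπ.1 (hπ.2.trans (colSum_sinkPlan_succ c β hp hq t).symm)
    (log_sinkPlan_succ_div c β hp hq t)

variable {c β}

lemma antitone_stepObj_sinkPlan (hp : ∀ i, 0 < p i) (hq : ∀ j, 0 < q j) (hc : ∀ i j, 0 ≤ c i j)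
    (hα : Antitone fun t => β (t + 1) - β t) :
    Antitone fun t => stepObj c p (β (t + 1) - β t) (sinkPlan p q c β (t + 1)) := by
  refine antitone_nat_of_succ_le fun t => ?_
  have hpos (s : ℕ) (i : Fin m) (j : Fin n) : 0 ≤ sinkPlan p q c β s i j :=
    (sinkPlan_pos c β hp hq s i j).le
  have hstep := stepObj_sinkPlan_succ_add_KLmat_le c β hp hq (t + 1)
    (sinkPlan_succ_mem_GammaStar c β hp hq t)
  have hKL : 0 ≤ KLmat (sinkPlan p q c β (t + 1)) (sinkPlan p q c β (t + 1 + 1)) :=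
    KLmat_nonneg (hpos (t + 1)) (sinkPlan_pos c β hp hq (t + 1 + 1))
  have hmono := stepObj_mono_left hc p (hpos (t + 1)) (hα t.le_succ)
  rw [KLmat_self] at hstep
  dsimp only at hmono
  linarith

theorem annealed_sinkhorn_OMD_guarantee_pos_general (hp : ∀ i, 0 < p i) (hq : ∀ j, 0 < q j)
    (hc : ∀ i j, 0 ≤ c i j) (hα : Antitone fun t => β (t + 1) - β t) {t : ℕ} (ht : 1 ≤ t)
    {π : Matrix (Fin m) (Fin n) ℝ} (hπ : π ∈ GammaStar (m := m) q) :
    (β t - β (t - 1)) * frob c (sinkPlan p q c β t) + KLvec (rowSum (sinkPlan p q c β t)) p ≤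
      KLvec (rowSum π) p + ((β t - β 0) / (t : ℝ)) * frob c π +
        KLmat π (sinkPlan p q c β 0) / (t : ℝ) := by
  obtain ⟨t, rfl⟩ := Nat.exists_eq_add_of_le' ht
  have hsum : ∑ s ∈ range (t + 1), stepObj c p (β (s + 1) - β s) π =
      (t + 1 : ℕ) * KLvec (rowSum π) p + (β (t + 1) - β 0) * frob c π := by
    simp only [stepObj, Finset.sum_add_distrib, ← Finset.sum_mul, Finset.sum_range_sub,
      Finset.sum_const, Finset.card_range, nsmul_eq_mul, add_comm]
  have hregret := mul_le_sum_add_of_antitone_of_add_le (antitone_stepObj_sinkPlan hp hq hc hα)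
    (D := fun s => KLmat π (sinkPlan p q c β s))
    (fun s => stepObj_sinkPlan_succ_add_KLmat_le c β hp hq s hπ) t
    (KLmat_nonneg hπ.1 (sinkPlan_pos c β hp hq (t + 1)))
  rw [hsum, ← le_div_iff₀' (by positivity)] at hregret
  refine hregret.trans_eq ?_
  field_simp

end Sinkhorn

lemma neZero_of_mem_simplexPos {k : ℕ} {p : Fin k → ℝ} (hp : p ∈ simplexPos k) : NeZero k :=
  ⟨by rintro rfl; simpa using hp.2⟩

/-- OMD guarantee for Annealed Sinkhorn, Lemma 2, Eq. (8).
If `c ≥ 0` and `α_t = β_t - β_{t-1}` is nonnegative and nonincreasing, then for every `t ≥ 1`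
and every `π ∈ Γ(*,q)`:
`α_t ⟨c,π_t⟩ + KL(π_t𝟙|p) ≤ KL(π𝟙|p) + ((β_t - β_0)/t)⟨c,π⟩ + KL(π|π_0)/t`. -/
theorem annealed_sinkhorn_OMD_guarantee_pos
    {m n : ℕ} (p : Fin m → ℝ) (q : Fin n → ℝ) (c : Matrix (Fin m) (Fin n) ℝ)
    (hp : p ∈ simplexPos m) (hq : q ∈ simplexPos n) (hc : ∀ i j, 0 ≤ c i j)
    (β : ℕ → ℝ) (hβpos : ∀ t, 0 < β t)
    (hαnonneg : ∀ t, 0 ≤ β (t + 1) - β t)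
    (hαnonincr : ∀ t, β (t + 2) - β (t + 1) ≤ β (t + 1) - β t) :
    ∀ t, 1 ≤ t → ∀ π' ∈ GammaStar (m := m) q,
      (β t - β (t - 1)) * frob c (sinkPlan p q c β t) +
          KLvec (rowSum (sinkPlan p q c β t)) p ≤
        KLvec (rowSum π') p + ((β t - β 0) / (t : ℝ)) * frob c π' +
          KLmat π' (sinkPlan p q c β 0) / (t : ℝ) := by
  have := neZero_of_mem_simplexPos hp
  have := neZero_of_mem_simplexPos hq
  exact fun _ ht _ hπ => annealed_sinkhorn_OMD_guarantee_pos_general hp.1 hq.1 hc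
    (antitone_nat_of_succ_le hαnonincr) ht hπ

end
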